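/- arXiv:2006.11568 — 3 statements merged into one kernel-verified Lean document; each statement's English description precedes it below -/
import Mathlib

section
/- Fix integers m ≥ 3 and k with 2 ≤ k ≤ m−1. A function u : T_m → ℝ is sublevel k-quasiconvex if and only if for every vertex x ∈ T_m one has u(x) ≤ min_{Y ⊆ S(x), |Y| = k} max_{y ∈ Y} u(y), i.e. u(x) is at most the k-th smallest value of u on S(x); equivalently, u(x) ≤ max_{1≤i≤k} u(y_i) for every choice of k pairwise distinct successors y_1,...,y_k ∈ S(x). -/
open Filter Topology

/-- The maximum of `u` over the successors `x ++ [i]`, `i ∈ Y`. -/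
noncomputable def kMaxOn (m : ℕ) (u : List (Fin m) → ℝ) (x : List (Fin m))
    (Y : Finset (Fin m)) : ℝ :=
  sSup ((fun i : Fin m => u (x ++ [i])) '' (Y : Set (Fin m)))

/-- `min_{Y ⊆ S(x), |Y| = k} max_{y ∈ Y} u(y)`, the k-th smallest value of `u` on `S(x)`. -/
noncomputable def kMinMax (m k : ℕ) (u : List (Fin m) → ℝ) (x : List (Fin m)) : ℝ :=
  sInf (kMaxOn m u x '' {Y : Finset (Fin m) | Y.card = k})

/-- `u` is `k`-quasiconvex on the regular `m`-branching tree. -/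
def KQuasiconvex (m k : ℕ) (u : List (Fin m) → ℝ) : Prop :=
  ∀ x : List (Fin m), u x ≤ kMinMax m k u x

/-- Truncation of a branch `π` to level `l`. -/
def branchTrunc (m : ℕ) (π : ℕ → Fin m) (l : ℕ) : List (Fin m) :=
  List.ofFn fun i : Fin l => π i

/-- `ψ(π) = Σ_{j ≥ 1} a_j m^{-j}`. -/
noncomputable def psiBranch (m : ℕ) (π : ℕ → Fin m) : ℝ :=
  ∑' j : ℕ, ((π j : ℕ) : ℝ) / (m : ℝ) ^ (j + 1)

/-- `ψ(x) = Σ_{j=1}^{|x|} a_j m^{-j}` for a vertex `x`. -/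
noncomputable def psiVertex (m : ℕ) (x : List (Fin m)) : ℝ :=
  ∑ i : Fin x.length, ((x.get i : ℕ) : ℝ) / (m : ℝ) ^ ((i : ℕ) + 1)

/-- The class `QC_k(f)`: `k`-quasiconvex functions lying below `f` on the boundary. -/
def QCSet (m k : ℕ) (f : ℝ → ℝ) : Set (List (Fin m) → ℝ) :=
  {u | KQuasiconvex m k u ∧
    ∀ π : ℕ → Fin m, limsup (fun l => u (branchTrunc m π l)) atTop ≤ f (psiBranch m π)}

/-- The `k`-quasiconvex envelope `u*_f` of a boundary datum `f`. -/
noncomputable def qcEnvelope (m k : ℕ) (f : ℝ → ℝ) (x : List (Fin m)) : ℝ :=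
  sSup ((fun u : List (Fin m) → ℝ => u x) '' QCSet m k f)

/-- The class `𝔔C_k(g)`: `k`-quasiconvex functions lying below `g` inside the tree. -/
def OBSet (m k : ℕ) (g : List (Fin m) → ℝ) : Set (List (Fin m) → ℝ) :=
  {u | KQuasiconvex m k u ∧ ∀ x, u x ≤ g x}

/-- The `k`-quasiconvex envelope `u⋆_g` of an obstacle `g` inside the tree. -/
noncomputable def obEnvelope (m k : ℕ) (g : List (Fin m) → ℝ) (x : List (Fin m)) : ℝ :=
  sSup ((fun u : List (Fin m) → ℝ => u x) '' OBSet m k g)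

/-- A finite `k`-branching subtree of the `m`-branching tree with root `x`:
`x ∈ B`, every vertex of `B` extends `x`, `B` is closed under taking the parent
(down to `x`), and every vertex of `B` has either `0` or exactly `k` of its `m`
successors in `B`. -/
def IsKSubtree (m k : ℕ) (x : List (Fin m)) (B : Finset (List (Fin m))) : Prop :=
  x ∈ B ∧
  (∀ y ∈ B, ∃ s : List (Fin m), y = x ++ s) ∧
  (∀ y ∈ B, y ≠ x → y.dropLast ∈ B) ∧
  (∀ y ∈ B, {i : Fin m | y ++ [i] ∈ B}.ncard = 0 ∨ {i : Fin m | y ++ [i] ∈ B}.ncard = k)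

/-- The set `E(B)` of leaves (terminal nodes) of the subtree `B`. -/
def treeLeaves (m : ℕ) (B : Finset (List (Fin m))) : Set (List (Fin m)) :=
  {y | y ∈ B ∧ ∀ i : Fin m, y ++ [i] ∉ B}

/-- A set `C` is `k`-convex if the root of every finite `k`-branching subtree
with all its leaves in `C` belongs to `C`. -/
def KConvexSet (m k : ℕ) (C : Set (List (Fin m))) : Prop :=
  ∀ (x : List (Fin m)) (B : Finset (List (Fin m))),
    IsKSubtree m k x B → treeLeaves m B ⊆ C → x ∈ C

/-- `u` is sublevel `k`-quasiconvex: every sublevel set is `k`-convex. -/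
def SublevelKQuasiconvex (m k : ℕ) (u : List (Fin m) → ℝ) : Prop :=
  ∀ α : ℝ, KConvexSet m k {x | u x ≤ α}

/-!
A `k`-convex set is determined by one-step branching: the subtree formed by a vertex and `k` of its
successors has exactly those successors as its leaves, and conversely a longest vertex of a
`k`-branching subtree lying outside a one-step closed set `C` would have all its children in `C`.
For sublevel sets, quantifying the one-step condition over all levels `α` gives
`u x ≤ max_{y ∈ Y} u y`.
-/

section SuccessorStar

variable {ι : Type*} [DecidableEq ι] {x y : List ι} {Y : Finset ι} {i j : ι}

/-- The tree of height at most one with root `x` and children `x ++ [i]` for `i ∈ Y`, encoded by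
its set of vertices. -/
def successorStar (x : List ι) (Y : Finset ι) : Finset (List ι) :=
  insert x (Y.image fun i => x ++ [i])

theorem mem_successorStar : y ∈ successorStar x Y ↔ y = x ∨ ∃ i ∈ Y, x ++ [i] = y := by
  simp [successorStar]

theorem append_singleton_mem_successorStar : x ++ [i] ∈ successorStar x Y ↔ i ∈ Y := by
  simp [mem_successorStar]

theorem append_append_singleton_notMem_successorStar :
    (x ++ [j]) ++ [i] ∉ successorStar x Y := by
  simp [mem_successorStar]

end SuccessorStar

section KConvexSet

variable {m k : ℕ} {x : List (Fin m)} {Y : Finset (Fin m)} {C : Set (List (Fin m))}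

theorem isKSubtree_successorStar (x : List (Fin m)) (Y : Finset (Fin m)) :
    IsKSubtree m Y.card x (successorStar x Y) := by
  refine ⟨mem_successorStar.2 (.inl rfl), fun y hy => ?_, fun y hy hyx => ?_, fun y hy => ?_⟩ <;>
    obtain rfl | ⟨j, -, rfl⟩ := mem_successorStar.1 hy
  · exact ⟨[], by simp⟩
  · exact ⟨[j], rfl⟩
  · exact absurd rfl hyx
  · simp [mem_successorStar]
  · simp [append_singleton_mem_successorStar]
  · simp only [append_append_singleton_notMem_successorStar, Set.ofPred_false, Set.ncard_empty,
      true_or]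

theorem treeLeaves_successorStar (x : List (Fin m)) (hY : Y.Nonempty) :
    treeLeaves m (successorStar x Y) = (fun i => x ++ [i]) '' (Y : Set (Fin m)) := by
  ext y
  constructor
  · rintro ⟨hy, hleaf⟩
    obtain rfl | hchild := mem_successorStar.1 hy
    · obtain ⟨i, hi⟩ := hY
      exact absurd (append_singleton_mem_successorStar.2 hi) (hleaf i)
    · exact hchild
  · rintro ⟨j, hj, rfl⟩
    exact ⟨append_singleton_mem_successorStar.2 hj,
      fun _ => append_append_singleton_notMem_successorStar⟩

/-- One-step `k`-convexity: `C` contains every vertex with at least `k` successors in `C`. For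
`0 < k` it is the condition of `KConvexSet` on subtrees of height one only. -/
def OneStepKConvexSet (m k : ℕ) (C : Set (List (Fin m))) : Prop :=
  ∀ (x : List (Fin m)) (Y : Finset (Fin m)), Y.card = k → (∀ i ∈ Y, x ++ [i] ∈ C) → x ∈ C

theorem KConvexSet.oneStepKConvexSet (hk : 0 < k) (hC : KConvexSet m k C) :
    OneStepKConvexSet m k C := by
  rintro x Y rfl hYC
  refine hC x (successorStar x Y) (isKSubtree_successorStar x Y) ?_
  rw [treeLeaves_successorStar x (Finset.card_pos.1 hk)]
  exact Set.image_subset_iff.2 hYC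

theorem IsKSubtree.card_children_eq {B : Finset (List (Fin m))} (hB : IsKSubtree m k x B)
    {y : List (Fin m)} (hy : y ∈ B) (hleaf : y ∉ treeLeaves m B) :
    (Finset.univ.filter fun i => y ++ [i] ∈ B).card = k := by
  obtain ⟨-, -, -, hcard⟩ := hB
  obtain ⟨i, hi⟩ : ∃ i, y ++ [i] ∈ B := by
    by_contra! hno
    exact hleaf ⟨hy, hno⟩
  have hne : {i | y ++ [i] ∈ B}.ncard ≠ 0 := Set.ncard_ne_zero_of_mem (a := i) hi
  rw [← (hcard y hy).resolve_left hne, ← Set.ncard_coe_finset, Finset.coe_filter_univ]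

theorem OneStepKConvexSet.subtree_subset (hC : OneStepKConvexSet m k C)
    {B : Finset (List (Fin m))} (hB : IsKSubtree m k x B) (hleaves : treeLeaves m B ⊆ C) :
    (B : Set (List (Fin m))) ⊆ C := by
  by_contra hBC
  obtain ⟨y, ⟨hyB, hyC⟩, hmax⟩ := Set.exists_max_image ((B : Set (List (Fin m))) \ C) List.length
    (B.finite_toSet.subset Set.sdiff_subset) (Set.sdiff_nonempty.2 hBC)
  have hchildren : ∀ i, y ++ [i] ∈ B → y ++ [i] ∈ C := fun i hi => by
    by_contra hiC
    simpa using hmax (y ++ [i]) ⟨hi, hiC⟩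
  exact hyC <| hC y _ (hB.card_children_eq hyB fun hy => hyC (hleaves hy)) <| by
    simpa using hchildren

theorem OneStepKConvexSet.kConvexSet (hC : OneStepKConvexSet m k C) : KConvexSet m k C :=
  fun _ _ hB hleaves => hC.subtree_subset hB hleaves hB.1

theorem kConvexSet_iff_oneStepKConvexSet (hk : 0 < k) :
    KConvexSet m k C ↔ OneStepKConvexSet m k C :=
  ⟨KConvexSet.oneStepKConvexSet hk, OneStepKConvexSet.kConvexSet⟩

end KConvexSet

section MinMax

variable {m k : ℕ} {u : List (Fin m) → ℝ} {x : List (Fin m)} {a : ℝ}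

theorem kMaxOn_le_iff {Y : Finset (Fin m)} (hY : Y.Nonempty) :
    kMaxOn m u x Y ≤ a ↔ ∀ i ∈ Y, u (x ++ [i]) ≤ a :=
  (csSup_le_iff (Set.toFinite _).bddAbove (hY.to_set.image _)).trans Set.forall_mem_image

theorem le_kMinMax_iff (hkm : k ≤ m) :
    a ≤ kMinMax m k u x ↔ ∀ Y : Finset (Fin m), Y.card = k → a ≤ kMaxOn m u x Y := by
  have hne : {Y : Finset (Fin m) | Y.card = k}.Nonempty := by
    obtain ⟨Y, -, hY⟩ := Finset.exists_subset_card_eq (s := (Finset.univ : Finset (Fin m)))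
      (hkm.trans_eq (Finset.card_fin m).symm)
    exact ⟨Y, hY⟩
  exact (le_csInf_iff (Set.toFinite _).bddBelow (hne.image _)).trans Set.forall_mem_image

end MinMax

theorem sublevelKQuasiconvex_iff_local_general {m k : ℕ} (hk : 0 < k) (hkm : k ≤ m)
    (u : List (Fin m) → ℝ) :
    SublevelKQuasiconvex m k u ↔ ∀ x : List (Fin m), u x ≤ kMinMax m k u x :=
  calc SublevelKQuasiconvex m k u
      ↔ ∀ α, OneStepKConvexSet m k {x | u x ≤ α} :=
        forall_congr' fun _ => kConvexSet_iff_oneStepKConvexSet hk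
    _ ↔ ∀ α x (Y : Finset (Fin m)), Y.card = k → kMaxOn m u x Y ≤ α → u x ≤ α := by
        refine forall_congr' fun α => forall₃_congr fun x Y hY => ?_
        rw [kMaxOn_le_iff (Finset.card_pos.1 (hY ▸ hk))]
        rfl
    _ ↔ ∀ x (Y : Finset (Fin m)), Y.card = k → u x ≤ kMaxOn m u x Y :=
        ⟨fun h x Y hY => h _ x Y hY le_rfl, fun h _ x Y hY => (h x Y hY).trans⟩
    _ ↔ ∀ x, u x ≤ kMinMax m k u x := forall_congr' fun _ => (le_kMinMax_iff hkm).symm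

/-- sublevel `k`-quasiconvexity is equivalent to the local inequality
`u(x) ≤ min_{Y ⊆ S(x), |Y| = k} max_{y ∈ Y} u(y)` at every vertex. -/
theorem sublevelKQuasiconvex_iff_local (m k : ℕ) (hm : 3 ≤ m) (hk : 2 ≤ k) (hkm : k ≤ m - 1)
    (u : List (Fin m) → ℝ) :
    SublevelKQuasiconvex m k u ↔ ∀ x : List (Fin m), u x ≤ kMinMax m k u x :=
  sublevelKQuasiconvex_iff_local_general (by lia) (by lia) u
end

section
/- Fix integers m ≥ 3 and j, k with 2 ≤ j ≤ k ≤ m−1. Let u, v : T_m → ℝ be bounded functions satisfying, for every vertex x, u(x) ≥ min_{Y ⊆ S(x), |Y| = k} max_{y ∈ Y} u(y) and v(x) ≤ min_{Y ⊆ S(x), |Y| = j} max_{y ∈ Y} v(y). Assume that for every branch π of T_m, limsup_{l→∞} u(π|_l) ≥ liminf_{l→∞} v(π|_l). Then u(x) ≥ v(x) for every vertex x ∈ T_m. -/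
open Filter Topology

/-! At every vertex `x`, a `k`-set of successors realising the min-max for `u` contains a `j`-set,
on which the maximum of `v` is at least the `j`-th min-max of `v`. The successor attaining this
maximum therefore does not increase `u` and does not decrease `v`. Following such successors from
`x` gives a branch along which `u ≤ u x` and `v x ≤ v`, so `v x ≤ liminf v ≤ limsup u ≤ u x`. -/

section MinMax

variable {m j k : ℕ} {Y : Finset (Fin m)} {i : Fin m}

theorem le_kMaxOn (u : List (Fin m) → ℝ) (x : List (Fin m)) (hi : i ∈ Y) :
    u (x ++ [i]) ≤ kMaxOn m u x Y :=
  le_csSup (Y.finite_toSet.image _).bddAbove ⟨i, hi, rfl⟩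

theorem exists_mem_eq_kMaxOn (u : List (Fin m) → ℝ) (x : List (Fin m)) (hY : Y.Nonempty) :
    ∃ i ∈ Y, u (x ++ [i]) = kMaxOn m u x Y :=
  (hY.to_set.image _).csSup_mem (Y.finite_toSet.image _)

theorem kMinMax_le_kMaxOn (u : List (Fin m) → ℝ) (x : List (Fin m)) (hY : Y.card = k) :
    kMinMax m k u x ≤ kMaxOn m u x Y :=
  csInf_le (Set.toFinite _).bddBelow ⟨Y, hY, rfl⟩

theorem exists_card_eq_kMaxOn_eq_kMinMax (u : List (Fin m) → ℝ) (x : List (Fin m)) (hkm : k ≤ m) :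
    ∃ Y : Finset (Fin m), Y.card = k ∧ kMaxOn m u x Y = kMinMax m k u x := by
  have hne : {Y : Finset (Fin m) | Y.card = k}.Nonempty := by
    obtain ⟨Y, -, hY⟩ := Finset.exists_subset_card_eq
      (s := (Finset.univ : Finset (Fin m))) (n := k) (by simpa using hkm)
    exact ⟨Y, hY⟩
  exact (hne.image (kMaxOn m u x)).csInf_mem (Set.toFinite _)

theorem exists_le_kMinMax_and_kMinMax_le (u v : List (Fin m) → ℝ) (x : List (Fin m))
    (hj : 1 ≤ j) (hjk : j ≤ k) (hkm : k ≤ m) :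
    ∃ i : Fin m, u (x ++ [i]) ≤ kMinMax m k u x ∧ kMinMax m j v x ≤ v (x ++ [i]) := by
  obtain ⟨Y, hYcard, hY⟩ := exists_card_eq_kMaxOn_eq_kMinMax u x hkm
  obtain ⟨Z, hZY, hZcard⟩ := Finset.exists_subset_card_eq (hjk.trans_eq hYcard.symm)
  obtain ⟨i, hiZ, hi⟩ := exists_mem_eq_kMaxOn v x (Finset.card_pos.mp (hj.trans_eq hZcard.symm))
  exact ⟨i, (le_kMaxOn u x (hZY hiZ)).trans_eq hY, (kMinMax_le_kMaxOn v x hZcard).trans_eq hi.symm⟩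

end MinMax

section Branch

variable {m : ℕ}

theorem branchTrunc_zero (π : ℕ → Fin m) : branchTrunc m π 0 = [] :=
  List.ofFn_zero

theorem branchTrunc_succ (π : ℕ → Fin m) (l : ℕ) :
    branchTrunc m π (l + 1) = branchTrunc m π l ++ [π l] :=
  List.ofFn_succ_last

theorem length_branchTrunc (π : ℕ → Fin m) (l : ℕ) : (branchTrunc m π l).length = l :=
  List.length_ofFn

theorem exists_branch_eq_apply_branchTrunc (f : List (Fin m) → Fin m) :
    ∃ π : ℕ → Fin m, ∀ l, π l = f (branchTrunc m π l) := by
  let path : ℕ → List (Fin m) := fun l => (fun y => y ++ [f y])^[l] []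
  have branchTrunc_eq_path (l : ℕ) : branchTrunc m (fun n => f (path n)) l = path l := by
    induction l with
    | zero => exact branchTrunc_zero _
    | succ l ih => rw [branchTrunc_succ, ih, ← Function.iterate_succ_apply' (fun y => y ++ [f y])]
  exact ⟨fun n => f (path n), fun l => by rw [branchTrunc_eq_path]⟩

theorem exists_branch_forall {P : List (Fin m) → Prop} (hroot : P [])
    (hstep : ∀ y, P y → ∃ i, P (y ++ [i])) : ∃ π : ℕ → Fin m, ∀ l, P (branchTrunc m π l) := by
  have : Nonempty (Fin m) := (hstep [] hroot).nonempty
  choose! f hf using hstep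
  obtain ⟨π, hπ⟩ := exists_branch_eq_apply_branchTrunc f
  refine ⟨π, fun l => ?_⟩
  induction l with
  | zero => rwa [branchTrunc_zero]
  | succ l ih =>
    rw [branchTrunc_succ, hπ]
    exact hf _ ih

theorem exists_branch_forall_length_le {P : List (Fin m) → Prop} {x : List (Fin m)} (hx : P x)
    (hstep : ∀ y, P y → ∃ i, P (y ++ [i])) :
    ∃ π : ℕ → Fin m, ∀ l, x.length ≤ l → P (branchTrunc m π l) := by
  -- The alternative `y <+: x` lets the branch start at the root and forces it to pass through `x`.
  have hstep' (y : List (Fin m)) (hy : y <+: x ∨ P y) : ∃ i, y ++ [i] <+: x ∨ P (y ++ [i]) := by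
    rcases hy with ⟨_ | ⟨i, t⟩, rfl⟩ | hy
    · exact (hstep y (by simpa using hx)).imp fun _ => .inr
    · exact ⟨i, .inl ⟨t, by simp⟩⟩
    · exact (hstep y hy).imp fun _ => .inr
  obtain ⟨π, hπ⟩ := exists_branch_forall (P := fun y => y <+: x ∨ P y) (.inl x.nil_prefix) hstep'
  refine ⟨π, fun l hl => (hπ l).elim (fun hprefix => ?_) id⟩
  rwa [hprefix.eq_of_length_le (by rwa [length_branchTrunc])]

end Branch

theorem comparison_principle_general {m j k : ℕ} (hj : 1 ≤ j) (hjk : j ≤ k) (hkm : k ≤ m)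
    {u v : List (Fin m) → ℝ} (hub : BddBelow (Set.range u)) (hvb : BddAbove (Set.range v))
    (hu : ∀ x : List (Fin m), kMinMax m k u x ≤ u x) (hv : KQuasiconvex m j v)
    (hbdry : ∀ π : ℕ → Fin m,
      liminf (fun l => v (branchTrunc m π l)) atTop ≤
        limsup (fun l => u (branchTrunc m π l)) atTop)
    (x : List (Fin m)) : v x ≤ u x := by
  have hstep (y : List (Fin m)) (hy : u y ≤ u x ∧ v x ≤ v y) :
      ∃ i, u (y ++ [i]) ≤ u x ∧ v x ≤ v (y ++ [i]) := by
    obtain ⟨i, hui, hvi⟩ := exists_le_kMinMax_and_kMinMax_le u v y hj hjk hkm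
    exact ⟨i, hui.trans ((hu y).trans hy.1), (hy.2.trans (hv y)).trans hvi⟩
  obtain ⟨π, hπ⟩ := exists_branch_forall_length_le ⟨le_refl (u x), le_refl (v x)⟩ hstep
  have hev : ∀ᶠ l in atTop, u (branchTrunc m π l) ≤ u x ∧ v x ≤ v (branchTrunc m π l) :=
    eventually_atTop.mpr ⟨x.length, hπ⟩
  obtain ⟨a, ha⟩ := hub
  obtain ⟨b, hb⟩ := hvb
  calc
    v x ≤ liminf (fun l => v (branchTrunc m π l)) atTop :=
      le_liminf_of_le (isCoboundedUnder_ge_of_le atTop fun _ => hb ⟨_, rfl⟩)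
        (hev.mono fun _ => And.right)
    _ ≤ limsup (fun l => u (branchTrunc m π l)) atTop := hbdry π
    _ ≤ u x :=
      limsup_le_of_le (isCoboundedUnder_le_of_le atTop fun _ => ha ⟨_, rfl⟩)
        (hev.mono fun _ => And.left)

/-- comparison principle for super- and subsolutions with ordered boundary data. -/
theorem comparison_principle (m j k : ℕ) (hm : 3 ≤ m) (hj : 2 ≤ j) (hjk : j ≤ k)
    (hkm : k ≤ m - 1) (u v : List (Fin m) → ℝ)
    (hub : ∃ C : ℝ, ∀ x, |u x| ≤ C) (hvb : ∃ C : ℝ, ∀ x, |v x| ≤ C)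
    (hu : ∀ x : List (Fin m), kMinMax m k u x ≤ u x)
    (hv : ∀ x : List (Fin m), v x ≤ kMinMax m j v x)
    (hbdry : ∀ π : ℕ → Fin m,
      liminf (fun l => v (branchTrunc m π l)) atTop ≤
        limsup (fun l => u (branchTrunc m π l)) atTop) :
    ∀ x : List (Fin m), v x ≤ u x :=
  comparison_principle_general (by omega) hjk (by omega)
    (isBounded_iff_forall_norm_le.mpr (by simpa using hub)).bddBelow
    (isBounded_iff_forall_norm_le.mpr (by simpa using hvb)).bddAbove hu hv hbdry
end

section
/- Fix integers m ≥ 3 and k with 2 ≤ k ≤ m−1, and let g : T_m → ℝ be bounded below. Then for every vertex x outside the coincidence set, i.e. every x with u⋆_g(x) < g(x), the envelope satisfies the equation u⋆_g(x) = min_{Y ⊆ S(x), |Y| = k} max_{y ∈ Y} u⋆_g(y). -/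
open Filter Topology

/-!
The functions in `𝔔C_k(g)` are exactly those with `u ≤ T u`, where `T u = g ⊓ kMinMax m k u`. Since
`T` is monotone, the supremum `u⋆_g` of these functions is a fixed point of `T` by the
Knaster–Tarski argument. Hence `u⋆_g = min (g, kMinMax m k u⋆_g)`, and off the coincidence set the
minimum is not `g`.
-/

theorem isFixedPt_of_isLUB_le_map {α : Type*} [PartialOrder α] {f : α → α} (hf : Monotone f)
    {a : α} (ha : IsLUB {u | u ≤ f u} a) : Function.IsFixedPt f a :=
  have le_map : a ≤ f a := ha.2 fun _ hu => hu.trans (hf (ha.1 hu))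
  (ha.1 (hf le_map)).antisymm le_map

section Envelope

variable {m k : ℕ}

theorem kMaxOn_mono (x : List (Fin m)) (Y : Finset (Fin m)) :
    Monotone fun u : List (Fin m) → ℝ => kMaxOn m u x Y := fun u v huv => by
  simpa only [kMaxOn, sSup_image'] using
    ciSup_mono (Set.finite_range _).bddAbove fun i : (Y : Set (Fin m)) => huv (x ++ [i.1])

theorem kMinMax_mono : Monotone (kMinMax m k) := fun u v huv x => by
  simpa only [kMinMax, sInf_image'] using
    ciInf_mono (Set.finite_range _).bddBelow
      fun Y : {Y : Finset (Fin m) | Y.card = k} => kMaxOn_mono x Y.1 huv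

theorem kMaxOn_const (C : ℝ) (x : List (Fin m)) {Y : Finset (Fin m)} (hY : Y.Nonempty) :
    kMaxOn m (fun _ => C) x Y = C := by
  rw [kMaxOn, (Finset.coe_nonempty.mpr hY).image_const, csSup_singleton]

theorem kMinMax_const (hk : 1 ≤ k) (hkm : k ≤ m) (C : ℝ) (x : List (Fin m)) :
    kMinMax m k (fun _ => C) x = C := by
  have exists_card_eq : {Y : Finset (Fin m) | Y.card = k}.Nonempty := by
    obtain ⟨Y, -, hY⟩ := Finset.exists_subset_card_eq (s := (Finset.univ : Finset (Fin m)))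
      (hkm.trans_eq (Finset.card_fin m).symm)
    exact ⟨Y, hY⟩
  have kMaxOn_eq : ∀ Y ∈ {Y : Finset (Fin m) | Y.card = k}, kMaxOn m (fun _ => C) x Y = C :=
    fun Y hY => kMaxOn_const C x (Finset.card_pos.mp (hk.trans_eq hY.symm))
  rw [kMinMax, Set.image_congr kMaxOn_eq, exists_card_eq.image_const, csInf_singleton]

theorem kQuasiconvex_const (hk : 1 ≤ k) (hkm : k ≤ m) (C : ℝ) :
    KQuasiconvex m k fun _ => C := fun x => (kMinMax_const hk hkm C x).ge

variable {g : List (Fin m) → ℝ}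

theorem obSet_nonempty_of_forall_le (hk : 1 ≤ k) (hkm : k ≤ m) {C : ℝ} (hC : ∀ x, C ≤ g x) :
    (OBSet m k g).Nonempty :=
  ⟨fun _ => C, kQuasiconvex_const hk hkm C, hC⟩

theorem obSet_eq_setOf_le_inf_kMinMax : OBSet m k g = {u | u ≤ g ⊓ kMinMax m k u} := by
  ext u
  rw [Set.mem_ofPred_eq, le_inf_iff]
  exact and_comm

theorem isLUB_obEnvelope (hne : (OBSet m k g).Nonempty) :
    IsLUB (OBSet m k g) (obEnvelope m k g) :=
  isLUB_pi.mpr fun x =>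
    isLUB_csSup (hne.image _) ⟨g x, Set.forall_mem_image.mpr fun _ hu => hu.2 x⟩

theorem obEnvelope_eq_inf_kMinMax (hne : (OBSet m k g).Nonempty) :
    obEnvelope m k g = g ⊓ kMinMax m k (obEnvelope m k g) := by
  have operator_mono : Monotone fun u => g ⊓ kMinMax m k u :=
    monotone_const.inf kMinMax_mono
  have envelope_isLUB : IsLUB {u | u ≤ g ⊓ kMinMax m k u} (obEnvelope m k g) :=
    obSet_eq_setOf_le_inf_kMinMax ▸ isLUB_obEnvelope hne
  exact (isFixedPt_of_isLUB_le_map operator_mono envelope_isLUB).symm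

theorem obstacle_equation_off_coincidence_general (hne : (OBSet m k g).Nonempty)
    {x : List (Fin m)} (hx : obEnvelope m k g x < g x) :
    obEnvelope m k g x = kMinMax m k (obEnvelope m k g) x := by
  have eq_min : obEnvelope m k g x = min (g x) (kMinMax m k (obEnvelope m k g) x) :=
    congrFun (obEnvelope_eq_inf_kMinMax hne) x
  have not_obstacle_le : ¬ g x ≤ kMinMax m k (obEnvelope m k g) x :=
    inf_lt_left.mp (eq_min.symm.trans_lt hx)
  exact eq_min.trans (min_eq_right (le_of_not_ge not_obstacle_le))

end Envelope

/-- outside the coincidence set the obstacle envelope satisfies the equation. -/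
theorem obstacle_equation_off_coincidence (m k : ℕ) (hm : 3 ≤ m) (hk : 2 ≤ k) (hkm : k ≤ m - 1)
    (g : List (Fin m) → ℝ) (hg : ∃ C : ℝ, ∀ x, C ≤ g x) :
    ∀ x : List (Fin m), obEnvelope m k g x < g x →
      obEnvelope m k g x = kMinMax m k (obEnvelope m k g) x := by
  obtain ⟨C, hC⟩ := hg
  exact fun x hx => obstacle_equation_off_coincidence_general
    (obSet_nonempty_of_forall_le (by lia) (by lia) hC) hx
end
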